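/- Fix d ≥ 1 and privacy levels α_1,...,α_d ≥ 0. Let P and P̃ be probability laws of random vectors X = (X^1,...,X^d) and X̃ = (X̃^1,...,X̃^d) on ∏_j X^j, and let M, M̃ be the laws of the componentwise privatized views Z, Z̃ obtained by passing each component X^j independently through an α_j-LDP channel Q^j. Assume additionally that for every strict subset S ⊊ {1,...,d}, the marginal laws coincide: Law(X^{(S)}) = Law(X̃^{(S)}). Then d_{KL}(M, M̃) ≤ (∏_{j=1}^d (e^{α_j} − 1))² · d_{TV}(P, P̃)². -/

import Mathlib

open MeasureTheory Real

/-- Total variation `∫ |dP − dPt|` (twice the usual TV distance). -/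
noncomputable def dTV {W : Type*} [MeasurableSpace W] (P Pt : Measure W)
    [IsFiniteMeasure P] [IsFiniteMeasure Pt] : ℝ :=
  (((P.toSignedMeasure - Pt.toSignedMeasure).totalVariation) Set.univ).toReal

/-- Kullback–Leibler divergence `d_KL(M, Mt) = ∫ log (dMt/dM) dMt`. -/
noncomputable def dKL {W : Type*} [MeasurableSpace W] (M Mt : Measure W) : ℝ :=
  ∫ z, Real.log ((Mt.rnDeriv M z).toReal) ∂Mt

/-!
Fix an output event `A` and a reference input `x₀`, and let `g x` be the probability of `A` given
the input `x`. Expand the mixed difference of `g` between `x₀` and `x` over all coordinates: each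
term but `g x` itself involves a strict subset of the coordinates of `x`, so its integrals against
`P` and `Pt` agree. Hence `Pt` and `P` give `A` output probabilities that differ by the integral of
the mixed difference against `Pt - P`. On the other hand the mixed difference is
`∫ z in A, ∏ i, (f i z - 1)` with respect to the output law at `x₀`, where `f i` is a likelihood
ratio of the `i`-th channel and `|f i - 1| ≤ exp (α i) - 1`. So the output laws differ on `A` by at
most `(∏ i, (exp (α i) - 1)) * dTV P Pt` times the probability of `A` given `x₀`; averaging over
`x₀ ∼ P` makes this a relative bound on the output density, and the divergence is at most the
`χ²`-divergence. Arguing event by event avoids jointly measurable versions of the densities.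
-/

open ProbabilityTheory InformationTheory
open scoped Finset

section RelClose

variable {W : Type*} [MeasurableSpace W] {μ ν : Measure W} {c : ℝ}

/-- `μ` is within relative distance `c` of `ν`: on every measurable set the two differ by at most
`c` times the mass of `ν`. -/
def RelClose (c : ℝ) (μ ν : Measure W) : Prop :=
  ∀ A, MeasurableSet A → |μ.real A - ν.real A| ≤ c * ν.real A

theorem relClose_of_le_exp_mul [IsFiniteMeasure μ] [IsFiniteMeasure ν] {a : ℝ}
    (hμν : ∀ A, MeasurableSet A → μ A ≤ ENNReal.ofReal (exp a) * ν A)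
    (hνμ : ∀ A, MeasurableSet A → ν A ≤ ENNReal.ofReal (exp a) * μ A) :
    RelClose (exp a - 1) μ ν := by
  have real_le {m n : ENNReal} (hn : n ≠ ⊤) (h : m ≤ ENNReal.ofReal (exp a) * n) :
      m.toReal ≤ exp a * n.toReal := by
    simpa [exp_nonneg] using ENNReal.toReal_mono (ENNReal.mul_ne_top ENNReal.ofReal_ne_top hn) h
  intro A hA
  have upper : μ.real A ≤ exp a * ν.real A := real_le (measure_ne_top ν A) (hμν A hA)
  have lower : exp (-a) * ν.real A ≤ μ.real A := by
    rw [exp_neg, inv_mul_le_iff₀ (exp_pos a)]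
    exact real_le (measure_ne_top μ A) (hνμ A hA)
  have two_le : 2 ≤ exp a + exp (-a) := by linarith [one_le_cosh a, cosh_eq a]
  rw [abs_le]
  constructor
  · nlinarith [mul_le_mul_of_nonneg_right two_le (measureReal_nonneg (μ := ν) (s := A))]
  · linarith

namespace RelClose

theorem absolutelyContinuous [IsFiniteMeasure μ] (h : RelClose c μ ν) : μ ≪ ν := by
  refine Measure.AbsolutelyContinuous.mk fun A hA hνA ↦ ?_
  have hμA := h A hA
  rw [measureReal_def ν, hνA] at hμA
  exact (measureReal_eq_zero_iff).1 (by simpa using hμA)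

variable [IsFiniteMeasure μ] [IsFiniteMeasure ν]

theorem ae_abs_rnDeriv_sub_one_le (h : RelClose c μ ν) :
    ∀ᵐ z ∂ν, |(μ.rnDeriv ν z).toReal - 1| ≤ c := by
  have hint : Integrable (fun z ↦ (μ.rnDeriv ν z).toReal) ν := Measure.integrable_toReal_rnDeriv
  have upper : (fun z ↦ (μ.rnDeriv ν z).toReal) ≤ᵐ[ν] fun _ ↦ 1 + c := by
    refine ae_le_of_forall_setIntegral_le hint (integrable_const _) fun A hA _ ↦ ?_
    rw [Measure.setIntegral_toReal_rnDeriv h.absolutelyContinuous, setIntegral_const, smul_eq_mul]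
    linarith [(abs_le.1 (h A hA)).2]
  have lower : (fun _ ↦ 1 - c) ≤ᵐ[ν] fun z ↦ (μ.rnDeriv ν z).toReal := by
    refine ae_le_of_forall_setIntegral_le (integrable_const _) hint fun A hA _ ↦ ?_
    rw [Measure.setIntegral_toReal_rnDeriv h.absolutelyContinuous, setIntegral_const, smul_eq_mul]
    linarith [(abs_le.1 (h A hA)).1]
  filter_upwards [upper, lower] with z hu hl
  exact abs_le.2 ⟨by linarith, by linarith⟩

end RelClose

end RelClose

section KullbackLeibler

variable {W : Type*} [MeasurableSpace W] {μ ν : Measure W}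

theorem klFun_le_sq_sub_one {x : ℝ} (hx : 0 ≤ x) : klFun x ≤ (x - 1) ^ 2 := by
  have mul_log_le : x * log x ≤ x * (x - 1) := by
    rcases hx.eq_or_lt with rfl | hx
    · simp
    · exact mul_le_mul_of_nonneg_left (log_le_sub_one_of_pos hx) hx.le
  rw [klFun_apply]
  linarith

theorem RelClose.klDiv_le [IsFiniteMeasure μ] [IsFiniteMeasure ν] {c : ℝ} (h : RelClose c μ ν) :
    klDiv μ ν ≤ ENNReal.ofReal (c ^ 2) * ν Set.univ := by
  rw [klDiv_eq_lintegral_klFun_of_ac h.absolutelyContinuous, ← lintegral_const]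
  refine lintegral_mono_ae ?_
  filter_upwards [h.ae_abs_rnDeriv_sub_one_le] with z hz
  exact ENNReal.ofReal_le_ofReal <|
    (klFun_le_sq_sub_one ENNReal.toReal_nonneg).trans (sq_le_sq' (abs_le.1 hz).1 (abs_le.1 hz).2)

theorem dKL_le_of_klDiv_le_ofReal [IsFiniteMeasure μ] [IsFiniteMeasure ν]
    (hmass : μ Set.univ = ν Set.univ) {b : ℝ} (hb : 0 ≤ b)
    (h : klDiv μ ν ≤ ENNReal.ofReal b) : dKL ν μ ≤ b := by
  have hac : μ ≪ ν := (klDiv_ne_top_iff.1 (ne_top_of_le_ne_top ENNReal.ofReal_ne_top h)).1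
  have hdKL : dKL ν μ = (klDiv μ ν).toReal := (toReal_klDiv_of_measure_eq hac hmass).symm
  exact hdKL.trans_le (ENNReal.toReal_le_of_le_ofReal hb h)

end KullbackLeibler

theorem abs_integral_sub_integral_le_mul_dTV {W : Type*} [MeasurableSpace W] {P Pt : Measure W}
    [IsFiniteMeasure P] [IsFiniteMeasure Pt] {g : W → ℝ} (hg : Measurable g) {b : ℝ}
    (hb : ∀ x, |g x| ≤ b) : |∫ x, g x ∂Pt - ∫ x, g x ∂P| ≤ b * dTV P Pt := by
  set s := P.toSignedMeasure - Pt.toSignedMeasure with hs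
  have hint (μ : Measure W) [IsFiniteMeasure μ] : μ.toSignedMeasure.Integrable g := by
    rw [VectorMeasure.Integrable, Measure.variation_toSignedMeasure]
    exact .of_bound hg.aestronglyMeasurable b (ae_of_all _ hb)
  have : IsFiniteMeasure s.variation := by
    rw [← SignedMeasure.totalVariation_eq_variation]
    unfold SignedMeasure.totalVariation
    infer_instance
  calc |∫ x, g x ∂Pt - ∫ x, g x ∂P| = ‖∫ᵛ x, g x ∂<•s‖ := by
        rw [hs, VectorMeasure.integral_sub_vectorMeasure (hint P) (hint Pt),
          VectorMeasure.integral_toSignedMeasure, VectorMeasure.integral_toSignedMeasure,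
          norm_eq_abs, abs_sub_comm]
    _ ≤ b * ‖(ContinuousLinearMap.lsmul ℝ ℝ (E := ℝ)).flip‖ * s.variation.real Set.univ :=
        VectorMeasure.norm_integral_le_of_norm_le_const (ae_of_all _ hb)
    _ = b * dTV P Pt := by
        rw [ContinuousLinearMap.opNorm_flip, ContinuousLinearMap.opNorm_lsmul, mul_one, dTV, ← hs,
          SignedMeasure.totalVariation_eq_variation, measureReal_def]

section ProductMeasure

variable {ι : Type*} [Fintype ι] {Z : ι → Type*} [∀ i, MeasurableSpace (Z i)]
  {μ ν : ∀ i, Measure (Z i)} [∀ i, IsFiniteMeasure (μ i)] [∀ i, IsFiniteMeasure (ν i)]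

variable (μ ν) in
theorem integrable_prod_rnDeriv (s : Finset ι) :
    Integrable (fun z ↦ ∏ i ∈ s, ((μ i).rnDeriv (ν i) (z i)).toReal) (Measure.pi ν) := by
  classical
  have hfactor (i : ι) :
      Integrable (fun z ↦ if i ∈ s then ((μ i).rnDeriv (ν i) z).toReal else 1) (ν i) := by
    split_ifs
    · exact Measure.integrable_toReal_rnDeriv
    · exact integrable_const 1
  simpa only [Finset.prod_ite_mem, Finset.univ_inter] using Integrable.fintype_prod_dep hfactor

theorem pi_eq_withDensity_prod_rnDeriv (h : ∀ i, μ i ≪ ν i) :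
    Measure.pi μ = (Measure.pi ν).withDensity
      fun z ↦ ENNReal.ofReal (∏ i, ((μ i).rnDeriv (ν i) (z i)).toReal) := by
  refine Measure.pi_eq fun s hs ↦ ?_
  rw [withDensity_apply _ (MeasurableSet.univ_pi hs),
    ← ofReal_integral_eq_lintegral_ofReal (integrable_prod_rnDeriv μ ν _).integrableOn
      (ae_of_all _ fun z ↦ Finset.prod_nonneg fun _ _ ↦ ENNReal.toReal_nonneg),
    Measure.restrict_pi_pi, integral_fintype_prod_eq_prod
      (f := fun i z ↦ ((μ i).rnDeriv (ν i) z).toReal),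
    ENNReal.ofReal_prod_of_nonneg fun _ _ ↦ integral_nonneg fun _ ↦ ENNReal.toReal_nonneg]
  refine Finset.prod_congr rfl fun i _ ↦ ?_
  rw [Measure.setIntegral_toReal_rnDeriv (h i), ofReal_measureReal]

theorem pi_real_apply_eq_setIntegral_prod_rnDeriv (h : ∀ i, μ i ≪ ν i) {A : Set (∀ i, Z i)}
    (hA : MeasurableSet A) : (Measure.pi μ).real A =
      ∫ z in A, ∏ i, ((μ i).rnDeriv (ν i) (z i)).toReal ∂Measure.pi ν := by
  rw [integral_eq_lintegral_of_nonneg_ae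
      (ae_of_all _ fun z ↦ Finset.prod_nonneg fun _ _ ↦ ENNReal.toReal_nonneg)
      (integrable_prod_rnDeriv μ ν _).aestronglyMeasurable.restrict,
    ← withDensity_apply _ hA, ← pi_eq_withDensity_prod_rnDeriv h, measureReal_def]

variable [DecidableEq ι]

theorem pi_piecewise_real_apply_eq_setIntegral (h : ∀ i, μ i ≪ ν i) (t : Finset ι)
    {A : Set (∀ i, Z i)} (hA : MeasurableSet A) :
    (Measure.pi (t.piecewise ν μ)).real A =
      ∫ z in A, ∏ i ∈ Finset.univ \ t, ((μ i).rnDeriv (ν i) (z i)).toReal ∂Measure.pi ν := by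
  have hfin (i : ι) : IsFiniteMeasure (t.piecewise ν μ i) :=
    t.piecewise_cases ν μ (fun m ↦ IsFiniteMeasure m) inferInstance inferInstance
  have hac (i : ι) : t.piecewise ν μ i ≪ ν i :=
    t.piecewise_cases ν μ (fun m ↦ m ≪ ν i) .rfl (h i)
  rw [pi_real_apply_eq_setIntegral_prod_rnDeriv hac hA]
  refine integral_congr_ae (ae_restrict_of_ae ?_)
  have rnDeriv_self : ∀ᵐ z ∂Measure.pi ν, ∀ i, (ν i).rnDeriv (ν i) (z i) = 1 :=
    ae_all_iff.2 fun i ↦ Measure.tendsto_eval_ae_ae (Measure.rnDeriv_self (ν i))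
  filter_upwards [rnDeriv_self] with z hz
  rw [← Finset.prod_sdiff (Finset.subset_univ t)]
  have prod_mem : ∏ i ∈ t, ((t.piecewise ν μ i).rnDeriv (ν i) (z i)).toReal = 1 :=
    Finset.prod_eq_one fun i hi ↦ by rw [t.piecewise_eq_of_mem _ _ hi, hz, ENNReal.toReal_one]
  rw [prod_mem, mul_one]
  refine Finset.prod_congr rfl fun i hi ↦ ?_
  rw [t.piecewise_eq_of_notMem _ _ (Finset.mem_sdiff.1 hi).2]

theorem sum_pi_piecewise_real_apply_eq_setIntegral (h : ∀ i, μ i ≪ ν i) {A : Set (∀ i, Z i)}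
    (hA : MeasurableSet A) :
    ∑ t : Finset ι, (-1) ^ #t * (Measure.pi (t.piecewise ν μ)).real A =
      ∫ z in A, ∏ i, (((μ i).rnDeriv (ν i) (z i)).toReal - 1) ∂Measure.pi ν := by
  simp_rw [pi_piecewise_real_apply_eq_setIntegral h _ hA, Finset.prod_sub, Finset.powerset_univ,
    Finset.prod_const_one, mul_one]
  rw [integral_finsetSum _ fun t _ ↦ (integrable_prod_rnDeriv μ ν _).integrableOn.const_mul _]
  simp_rw [integral_const_mul]

theorem abs_sum_pi_piecewise_real_apply_le {c : ι → ℝ} (h : ∀ i, RelClose (c i) (μ i) (ν i))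
    {A : Set (∀ i, Z i)} (hA : MeasurableSet A) :
    |∑ t : Finset ι, (-1) ^ #t * (Measure.pi (t.piecewise ν μ)).real A| ≤
      (∏ i, c i) * (Measure.pi ν).real A := by
  rw [sum_pi_piecewise_real_apply_eq_setIntegral (fun i ↦ (h i).absolutelyContinuous) hA,
    ← norm_eq_abs]
  have coord_le : ∀ᵐ z ∂Measure.pi ν, ∀ i, |((μ i).rnDeriv (ν i) (z i)).toReal - 1| ≤ c i :=
    ae_all_iff.2 fun i ↦ Measure.tendsto_eval_ae_ae (h i).ae_abs_rnDeriv_sub_one_le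
  refine norm_setIntegral_le_of_norm_le_const_ae' (measure_lt_top _ A) ?_
  filter_upwards [coord_le] with z hz _
  rw [norm_prod]
  exact Finset.prod_le_prod (fun _ _ ↦ norm_nonneg _) fun i _ ↦ hz i

end ProductMeasure

section MixedDifference

variable {ι : Type*} [DecidableEq ι] {X : ι → Type*}

theorem measurable_piecewise_right [∀ i, MeasurableSpace (X i)] (t : Finset ι) (x₀ : ∀ i, X i) :
    Measurable fun x ↦ t.piecewise x₀ x := by
  refine measurable_pi_lambda _ fun i ↦ ?_
  by_cases hi : i ∈ t <;> simp [hi, measurable_pi_apply]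

/-- The mixed difference `∑ t, (-1) ^ #t * g (x with the coordinates in t reset to x₀)` of `g`
between `x₀` and `x`: the composition over all coordinates `i` of the operators sending `g` to the
difference of its values at `x i` and at `x₀ i`. -/
def mixedDiff [Fintype ι] (g : (∀ i, X i) → ℝ) (x₀ x : ∀ i, X i) : ℝ :=
  ∑ t : Finset ι, (-1) ^ #t * g (t.piecewise x₀ x)

variable [Fintype ι]

theorem piecewise_eq_updateFinset_restrict_compl (t : Finset ι) (x₀ x : ∀ i, X i) :
    t.piecewise x₀ x = Function.updateFinset x₀ tᶜ (tᶜ.restrict x) := by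
  ext i
  by_cases hi : i ∈ t <;> simp [Function.updateFinset, hi]

variable [∀ i, MeasurableSpace (X i)]

theorem integral_piecewise_eq_of_map_restrict_eq {E : Type*} [NormedAddCommGroup E]
    [NormedSpace ℝ E] {P Pt : Measure (∀ i, X i)} {t : Finset ι}
    (h : P.map tᶜ.restrict = Pt.map tᶜ.restrict) {g : (∀ i, X i) → E} (hg : StronglyMeasurable g)
    (x₀ : ∀ i, X i) : ∫ x, g (t.piecewise x₀ x) ∂P = ∫ x, g (t.piecewise x₀ x) ∂Pt := by
  have hext : StronglyMeasurable fun y ↦ g (Function.updateFinset x₀ tᶜ y) :=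
    hg.comp_measurable measurable_updateFinset
  simp_rw [piecewise_eq_updateFinset_restrict_compl]
  rw [← integral_map (Finset.measurable_restrict tᶜ).aemeasurable hext.aestronglyMeasurable, h,
    integral_map (Finset.measurable_restrict tᶜ).aemeasurable hext.aestronglyMeasurable]

theorem measurable_mixedDiff {g : (∀ i, X i) → ℝ} (hg : Measurable g) (x₀ : ∀ i, X i) :
    Measurable (mixedDiff g x₀) :=
  Finset.measurable_fun_sum _ fun t _ ↦ (hg.comp (measurable_piecewise_right t x₀)).const_mul _

theorem integral_mixedDiff_sub_integral_mixedDiff {P Pt : Measure (∀ i, X i)}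
    [IsFiniteMeasure P] [IsFiniteMeasure Pt]
    (hmarg : ∀ s : Finset ι, s ≠ Finset.univ → P.map s.restrict = Pt.map s.restrict)
    {g : (∀ i, X i) → ℝ} (hg : Measurable g) {b : ℝ} (hb : ∀ x, |g x| ≤ b) (x₀ : ∀ i, X i) :
    ∫ x, mixedDiff g x₀ x ∂Pt - ∫ x, mixedDiff g x₀ x ∂P = ∫ x, g x ∂Pt - ∫ x, g x ∂P := by
  have hint (μ : Measure (∀ i, X i)) [IsFiniteMeasure μ] (t : Finset ι) :
      Integrable (fun x ↦ (-1) ^ #t * g (t.piecewise x₀ x)) μ :=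
    (Integrable.of_bound (hg.comp (measurable_piecewise_right t x₀)).aestronglyMeasurable b
      (ae_of_all _ fun _ ↦ hb _)).const_mul _
  unfold mixedDiff
  rw [integral_finsetSum _ fun t _ ↦ hint Pt t, integral_finsetSum _ fun t _ ↦ hint P t,
    ← Finset.sum_sub_distrib, Finset.sum_eq_single_of_mem ∅ (Finset.mem_univ _)]
  · simp
  · intro t _ ht
    have hcompl : tᶜ ≠ Finset.univ := by simpa using ht
    rw [integral_const_mul, integral_const_mul,
      integral_piecewise_eq_of_map_restrict_eq (hmarg tᶜ hcompl) hg.stronglyMeasurable, sub_self]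

end MixedDifference

section PiKernel

variable {ι : Type*} [Fintype ι] {X Z : ι → Type*} [∀ i, MeasurableSpace (X i)]
  [∀ i, MeasurableSpace (Z i)] (κ : ∀ i, Kernel (X i) (Z i))

/-- The componentwise channel: given `x`, the coordinates of the output are independent and the
`i`-th one is drawn from `κ i (x i)`. -/
noncomputable def piKernel [∀ i, IsFiniteKernel (κ i)] : Kernel (∀ i, X i) (∀ i, Z i) where
  toFun x := Measure.pi fun i ↦ κ i (x i)
  measurable' := by
    refine .measure_of_isPiSystem generateFrom_pi.symm isPiSystem_pi ?_ ?_
    · rintro _ ⟨s, hs, rfl⟩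
      simp only [Measure.pi_pi]
      exact Finset.measurable_fun_prod _ fun i _ ↦
        ((κ i).measurable_coe (hs i (Set.mem_univ i))).comp (measurable_pi_apply i)
    · simp only [Measure.pi_univ]
      exact Finset.measurable_fun_prod _ fun i _ ↦
        ((κ i).measurable_coe MeasurableSet.univ).comp (measurable_pi_apply i)

theorem piKernel_apply [∀ i, IsFiniteKernel (κ i)] (x : ∀ i, X i) :
    piKernel κ x = Measure.pi fun i ↦ κ i (x i) := rfl

instance [∀ i, IsMarkovKernel (κ i)] : IsMarkovKernel (piKernel κ) where
  isProbabilityMeasure x := by rw [piKernel_apply]; infer_instance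

theorem piKernel_piecewise [DecidableEq ι] [∀ i, IsFiniteKernel (κ i)] (t : Finset ι)
    (x₀ x : ∀ i, X i) : piKernel κ (t.piecewise x₀ x) =
      Measure.pi (t.piecewise (fun i ↦ κ i (x₀ i)) fun i ↦ κ i (x i)) := by
  rw [piKernel_apply]
  congr 1
  ext1 i
  by_cases hi : i ∈ t <;> simp [hi]

theorem abs_mixedDiff_piKernel_real_le [DecidableEq ι] [∀ i, IsFiniteKernel (κ i)] {c : ι → ℝ}
    {x₀ x : ∀ i, X i} (h : ∀ i, RelClose (c i) (κ i (x i)) (κ i (x₀ i)))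
    {A : Set (∀ i, Z i)} (hA : MeasurableSet A) :
    |mixedDiff (fun y ↦ (piKernel κ y).real A) x₀ x| ≤ (∏ i, c i) * (piKernel κ x₀).real A := by
  simp_rw [mixedDiff, piKernel_piecewise]
  exact abs_sum_pi_piecewise_real_apply_le h hA

end PiKernel

theorem comp_real_apply_eq_integral {V W : Type*} [MeasurableSpace V] [MeasurableSpace W]
    (κ : Kernel V W) [IsFiniteKernel κ] (μ : Measure V) {A : Set W} (hA : MeasurableSet A) :
    (κ ∘ₘ μ).real A = ∫ x, (κ x).real A ∂μ := by
  rw [measureReal_def, Measure.bind_apply hA κ.aemeasurable]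
  exact (integral_toReal (κ.measurable_coe hA).aemeasurable
    (ae_of_all _ fun x ↦ measure_lt_top (κ x) A)).symm

section Contraction

variable {ι : Type*} [Fintype ι] {X Z : ι → Type*} [∀ i, MeasurableSpace (X i)]
  [∀ i, MeasurableSpace (Z i)] {κ : ∀ i, Kernel (X i) (Z i)} [∀ i, IsMarkovKernel (κ i)]
  {P Pt : Measure (∀ i, X i)} {c : ι → ℝ}

theorem abs_piKernel_comp_real_sub_le [IsFiniteMeasure P] [IsFiniteMeasure Pt]
    (hκ : ∀ i x x', RelClose (c i) (κ i x) (κ i x'))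
    (hmarg : ∀ s : Finset ι, s ≠ Finset.univ → P.map s.restrict = Pt.map s.restrict)
    {A : Set (∀ i, Z i)} (hA : MeasurableSet A) (x₀ : ∀ i, X i) :
    |(piKernel κ ∘ₘ Pt).real A - (piKernel κ ∘ₘ P).real A| ≤
      (∏ i, c i) * dTV P Pt * (piKernel κ x₀).real A := by
  classical
  set g : (∀ i, X i) → ℝ := fun x ↦ (piKernel κ x).real A
  have hg : Measurable g := ((piKernel κ).measurable_coe hA).ennreal_toReal
  have hg_le (x : ∀ i, X i) : |g x| ≤ 1 := by
    rw [abs_of_nonneg measureReal_nonneg]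
    exact measureReal_le_one
  calc |(piKernel κ ∘ₘ Pt).real A - (piKernel κ ∘ₘ P).real A|
      = |∫ x, mixedDiff g x₀ x ∂Pt - ∫ x, mixedDiff g x₀ x ∂P| := by
        rw [integral_mixedDiff_sub_integral_mixedDiff hmarg hg hg_le,
          comp_real_apply_eq_integral _ _ hA, comp_real_apply_eq_integral _ _ hA]
    _ ≤ (∏ i, c i) * g x₀ * dTV P Pt :=
        abs_integral_sub_integral_le_mul_dTV (measurable_mixedDiff hg x₀) fun x ↦
          abs_mixedDiff_piKernel_real_le κ (fun i ↦ hκ i (x i) (x₀ i)) hA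
    _ = (∏ i, c i) * dTV P Pt * g x₀ := by ring

theorem relClose_piKernel_comp [IsProbabilityMeasure P] [IsFiniteMeasure Pt]
    (hκ : ∀ i x x', RelClose (c i) (κ i x) (κ i x'))
    (hmarg : ∀ s : Finset ι, s ≠ Finset.univ → P.map s.restrict = Pt.map s.restrict) :
    RelClose ((∏ i, c i) * dTV P Pt) (piKernel κ ∘ₘ Pt) (piKernel κ ∘ₘ P) := by
  intro A hA
  have hint := Kernel.IsMarkovKernel.integrable P (piKernel κ) hA
  have averaged := integral_mono (integrable_const _) (hint.const_mul ((∏ i, c i) * dTV P Pt))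
    (abs_piKernel_comp_real_sub_le hκ hmarg hA)
  rwa [integral_const, probReal_univ, one_smul, integral_const_mul,
    ← comp_real_apply_eq_integral _ _ hA] at averaged

end Contraction

theorem stmt_6_general {ι : Type*} [Fintype ι] {X Z : ι → Type*}
    [∀ i, MeasurableSpace (X i)] [∀ i, MeasurableSpace (Z i)] {α : ι → ℝ}
    (κ : ∀ i, Kernel (X i) (Z i)) [∀ i, IsMarkovKernel (κ i)]
    (hLDP : ∀ i (x x' : X i) (A : Set (Z i)), MeasurableSet A →
      κ i x A ≤ ENNReal.ofReal (exp (α i)) * κ i x' A)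
    (P Pt : Measure (∀ i, X i)) [IsProbabilityMeasure P] [IsProbabilityMeasure Pt]
    (hmarg : ∀ s : Finset ι, s ≠ Finset.univ → P.map s.restrict = Pt.map s.restrict) :
    klDiv (piKernel κ ∘ₘ Pt) (piKernel κ ∘ₘ P) ≤
      ENNReal.ofReal ((∏ i, (exp (α i) - 1)) ^ 2 * dTV P Pt ^ 2) := by
  have hκ (i : ι) (x x' : X i) : RelClose (exp (α i) - 1) (κ i x) (κ i x') :=
    relClose_of_le_exp_mul (hLDP i x x') (hLDP i x' x)
  simpa only [mul_pow, measure_univ, mul_one] using (relClose_piKernel_comp hκ hmarg).klDiv_le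

/-- Corollary `cor: main`: componentwise `α`-LDP privatization of
`P` and `Pt`, whose strict-subset marginals all coincide, contracts the KL
divergence of the privatized laws to
`(∏ j (e^{α_j} − 1))² · d_TV(P, Pt)²`. -/
theorem stmt_6 {d : ℕ} (hd : 1 ≤ d) (X Z : Fin d → Type*)
    [∀ j, MeasurableSpace (X j)] [∀ j, MeasurableSpace (Z j)]
    (α : Fin d → ℝ) (hα : ∀ j, 0 ≤ α j)
    (Q : (j : Fin d) → X j → Measure (Z j))
    [hMarkov : ∀ j x, IsProbabilityMeasure (Q j x)]
    (hker : ∀ j (A : Set (Z j)), MeasurableSet A → Measurable fun x => Q j x A)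
    (hLDP : ∀ j (x x' : X j) (A : Set (Z j)), MeasurableSet A →
      Q j x A ≤ ENNReal.ofReal (Real.exp (α j)) * Q j x' A)
    (P Pt : Measure (∀ j, X j)) [IsProbabilityMeasure P] [IsProbabilityMeasure Pt]
    (hmarg : ∀ S : Set (Fin d), S ≠ Set.univ →
      P.map (fun x (j : S) => x j) = Pt.map (fun x (j : S) => x j)) :
    dKL (P.bind fun x => Measure.pi fun j => Q j (x j))
        (Pt.bind fun x => Measure.pi fun j => Q j (x j))
      ≤ (∏ j, (Real.exp (α j) - 1)) ^ 2 * (dTV P Pt) ^ 2 := by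
  let κ (j : Fin d) : Kernel (X j) (Z j) := ⟨Q j, Measure.measurable_of_measurable_coe _ (hker j)⟩
  have hκ (j : Fin d) : IsMarkovKernel (κ j) := ⟨hMarkov j⟩
  have hle : klDiv (piKernel κ ∘ₘ Pt) (piKernel κ ∘ₘ P) ≤ _ :=
    stmt_6_general κ hLDP P Pt fun s hs ↦ hmarg s (by simpa using hs)
  exact dKL_le_of_klDiv_le_ofReal (μ := piKernel κ ∘ₘ Pt) (ν := piKernel κ ∘ₘ P)
    (by simp) (by positivity) hle
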